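/- arXiv:1905.08925 — 9 statements merged into one kernel-verified Lean document; each statement's English description precedes it below -/
import Mathlib

section
/- Every strategyproof deterministic allocation algorithm is monotone in the following sense. Let A be SP, let c = (c_1,…,c_n) be a profile, let i be an agent whose cost vector c_i assigns distinct total costs to distinct subsets of M, and let x = A(c). (a) If item j is not in x_i and c' is the profile obtained from c by only increasing c_{ij} (to some c'_{ij} > c_{ij}), then A(c')_i = x_i. (b) If item j is in x_i and c' is obtained from c by only decreasing c_{ij} (to some c'_{ij} < c_{ij}), then A(c')_i = x_i. -/
/-!
Suppose agent `i`, who receives `S`, lowers costs inside `S` and raises costs outside `S`, after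
which she receives `T`. Moving from `c` to `c'` then raises the cost of `T` by at least as much as
that of `S`. Since `c' T ≤ c' S` by strategyproofness at the new profile, `c T ≤ c S`, and
strategyproofness at the old profile gives `c S ≤ c T`. Costs of distinct bundles being distinct,
`T = S`.
-/

open Finset Function

section MonotonicTransformation

variable {M R : Type*} {S : Finset M} {f g : M → R}

/-- `g` is a monotonic transformation of the cost vector `f` at the bundle `S`: passing from `f` to
`g` makes `S` more attractive item by item. As in social choice theory, the comparisons are weak
and any number of items may change. -/
structure IsMonotonicTransformation [LE R] (S : Finset M) (f g : M → R) : Prop where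
  le_of_mem : ∀ j ∈ S, g j ≤ f j
  le_of_notMem : ∀ j ∉ S, f j ≤ g j

namespace IsMonotonicTransformation

theorem update_of_mem [DecidableEq M] [Preorder R] {j : M} {v : R} (hj : j ∈ S) (hv : v ≤ f j) :
    IsMonotonicTransformation S f (update f j v) where
  le_of_mem k _ := update_le_self_iff.2 hv k
  le_of_notMem _ hk := (update_of_ne (ne_of_mem_of_not_mem hj hk).symm v f).ge

theorem update_of_notMem [DecidableEq M] [Preorder R] {j : M} {v : R} (hj : j ∉ S)
    (hv : f j ≤ v) : IsMonotonicTransformation S f (update f j v) where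
  le_of_mem _ hk := (update_of_ne (ne_of_mem_of_not_mem hk hj) v f).le
  le_of_notMem k _ := le_update_self_iff.2 hv k

theorem sum_add_sum_le [AddCommMonoid R] [PartialOrder R] [IsOrderedAddMonoid R]
    (h : IsMonotonicTransformation S f g) (T : Finset M) :
    ∑ j ∈ S, g j + ∑ j ∈ T, f j ≤ ∑ j ∈ S, f j + ∑ j ∈ T, g j := by
  classical
  have hST : ∑ j ∈ S \ T, g j ≤ ∑ j ∈ S \ T, f j :=
    sum_le_sum fun j hj ↦ h.le_of_mem j (mem_sdiff.1 hj).1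
  have hTS : ∑ j ∈ T \ S, f j ≤ ∑ j ∈ T \ S, g j :=
    sum_le_sum fun j hj ↦ h.le_of_notMem j (mem_sdiff.1 hj).2
  have sum_split (u : M → R) (P Q : Finset M) :
      ∑ j ∈ P, u j = ∑ j ∈ P ∩ Q, u j + ∑ j ∈ P \ Q, u j :=
    (sum_inter_add_sum_sdiff P Q u).symm
  calc ∑ j ∈ S, g j + ∑ j ∈ T, f j
      = (∑ j ∈ S ∩ T, f j + ∑ j ∈ S ∩ T, g j) + (∑ j ∈ S \ T, g j + ∑ j ∈ T \ S, f j) := by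
        rw [sum_split g S T, sum_split f T S, inter_comm T S]; abel
    _ ≤ (∑ j ∈ S ∩ T, f j + ∑ j ∈ S ∩ T, g j) + (∑ j ∈ S \ T, f j + ∑ j ∈ T \ S, g j) := by
        gcongr
    _ = ∑ j ∈ S, f j + ∑ j ∈ T, g j := by
        rw [sum_split f S T, sum_split g T S, inter_comm T S]; abel

end IsMonotonicTransformation

end MonotonicTransformation

theorem update_update_nonneg {N M R : Type*} [DecidableEq N] [DecidableEq M] [Zero R] [Preorder R]
    {c : N → M → R} (hc : 0 ≤ c) (i : N) (j : M) {v : R} (hv : 0 ≤ v) :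
    0 ≤ update c i (update (c i) j v) :=
  le_update_iff.2 ⟨le_update_iff.2 ⟨hv, fun k _ ↦ hc i k⟩, fun k _ ↦ hc k⟩

section Strategyproof

variable {N M R : Type*} [DecidableEq N] [Fintype M]

/-- The bundle of agent `i` under an allocation, encoded as the map from items to their owners. -/
def bundle (a : M → N) (i : N) : Finset M :=
  {j | a j = i}

theorem mem_bundle {a : M → N} {i : N} {j : M} : j ∈ bundle a i ↔ a j = i := by
  simp [bundle]

/-- Strategyproofness of the algorithm `A` on a domain `D` of admissible cost profiles: no
unilateral misreport that stays in `D` lowers the true cost of the deviating agent's bundle. -/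
def IsStrategyproofOn [AddCommMonoid R] [LE R] (D : Set (N → M → R))
    (A : (N → M → R) → M → N) : Prop :=
  ∀ c ∈ D, ∀ (i : N) (r : M → R), update c i r ∈ D →
    ∑ j ∈ bundle (A c) i, c i j ≤ ∑ j ∈ bundle (A (update c i r)) i, c i j

theorem isStrategyproofOn_Ici_zero_iff [AddCommMonoid R] [Preorder R] {A : (N → M → R) → M → N} :
    IsStrategyproofOn (Set.Ici 0) A ↔
      ∀ c : N → M → R, (∀ i j, 0 ≤ c i j) → ∀ (i : N) (r : M → R), (∀ j, 0 ≤ r j) →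
        ∑ j ∈ bundle (A c) i, c i j ≤ ∑ j ∈ bundle (A (update c i r)) i, c i j := by
  refine forall₂_congr fun c hc ↦ forall₂_congr fun i r ↦ imp_congr_left ?_
  exact le_update_iff.trans (and_iff_left fun k _ ↦ hc k)

variable [AddCommMonoid R] [PartialOrder R] [IsOrderedCancelAddMonoid R]
  {D : Set (N → M → R)} {A : (N → M → R) → M → N} {c : N → M → R} {i : N} {r : M → R}

theorem IsStrategyproofOn.sum_bundle_update_eq (hA : IsStrategyproofOn D A) (hc : c ∈ D)
    (hr : update c i r ∈ D) (h : IsMonotonicTransformation (bundle (A c) i) (c i) r) :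
    ∑ j ∈ bundle (A (update c i r)) i, c i j = ∑ j ∈ bundle (A c) i, c i j := by
  set S := bundle (A c) i
  set T := bundle (A (update c i r)) i
  have truthful_before : ∑ j ∈ S, c i j ≤ ∑ j ∈ T, c i j := hA c hc i r hr
  have truthful_after : ∑ j ∈ T, r j ≤ ∑ j ∈ S, r j := by
    simpa [S, T, hc] using hA (update c i r) hr i (c i)
  refine truthful_before.antisymm' (le_of_add_le_add_left (a := ∑ j ∈ S, r j) ?_)
  calc ∑ j ∈ S, r j + ∑ j ∈ T, c i j
      ≤ ∑ j ∈ S, c i j + ∑ j ∈ T, r j := h.sum_add_sum_le T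
    _ ≤ ∑ j ∈ S, c i j + ∑ j ∈ S, r j := by gcongr
    _ = ∑ j ∈ S, r j + ∑ j ∈ S, c i j := add_comm _ _

theorem sp_implies_monotone_general (hA : IsStrategyproofOn D A) (hc : c ∈ D)
    (hdist : Injective fun S : Finset M ↦ ∑ j ∈ S, c i j) (hr : update c i r ∈ D)
    (h : IsMonotonicTransformation (bundle (A c) i) (c i) r) :
    bundle (A (update c i r)) i = bundle (A c) i :=
  hdist (hA.sum_bundle_update_eq hc hr h)

end Strategyproof

/-- every strategyproof deterministic allocation algorithm is monotone.
An algorithm maps cost profiles `c : Fin n → Fin m → ℝ` (nonnegative) to allocations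
`Fin m → Fin n` (item `j` goes to agent `A c j`); agent `i`'s bundle is
`{j | A c j = i}`.  Strategyproofness: no agent can decrease the true cost of her
bundle by misreporting.  If agent `i`'s cost vector gives distinct totals to
distinct subsets, then (a) increasing the cost of an item not in her bundle, or
(b) decreasing the cost of an item in her bundle, leaves her bundle unchanged. -/
theorem sp_implies_monotone (n m : ℕ)
    (A : (Fin n → Fin m → ℝ) → (Fin m → Fin n))
    (hSP : ∀ (c : Fin n → Fin m → ℝ), (∀ i' j', 0 ≤ c i' j') →
      ∀ (i : Fin n) (c'i : Fin m → ℝ), (∀ j', 0 ≤ c'i j') →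
      ∑ j ∈ Finset.univ.filter (fun j => A c j = i), c i j ≤
        ∑ j ∈ Finset.univ.filter (fun j => A (Function.update c i c'i) j = i), c i j)
    (c : Fin n → Fin m → ℝ) (hc : ∀ i' j', 0 ≤ c i' j') (i : Fin n)
    (hdist : ∀ S T : Finset (Fin m), S ≠ T → ∑ j ∈ S, c i j ≠ ∑ j ∈ T, c i j)
    (j : Fin m) (v : ℝ) :
    -- (a) increasing the cost of an item outside agent i's bundle
    (A c j ≠ i → c i j < v →
      Finset.univ.filter
          (fun j' => A (Function.update c i (Function.update (c i) j v)) j' = i) =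
        Finset.univ.filter (fun j' => A c j' = i)) ∧
    -- (b) decreasing the cost of an item inside agent i's bundle
    (A c j = i → 0 ≤ v → v < c i j →
      Finset.univ.filter
          (fun j' => A (Function.update c i (Function.update (c i) j v)) j' = i) =
        Finset.univ.filter (fun j' => A c j' = i)) := by
  have bundle_eq (hv : 0 ≤ v) := sp_implies_monotone_general
    (isStrategyproofOn_Ici_zero_iff.2 hSP) hc (fun S T ↦ not_imp_not.1 (hdist S T))
    (update_update_nonneg hc i j hv)
  exact ⟨fun hj hlt ↦ bundle_eq ((hc i j).trans hlt.le)
      (.update_of_notMem (mem_bundle.not.2 hj) hlt.le),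
    fun hj hv hlt ↦ bundle_eq hv (.update_of_mem (mem_bundle.2 hj) hlt.le)⟩
end

section
/- No deterministic ordinal allocation algorithm for 2 agents and 4 chores has approximation ratio smaller than 4/3: for every function A mapping pairs of rankings of the 4 items to allocations, there exist a profile of rankings R = (R_1, R_2) and cost vectors c_1, c_2 consistent with R_1 and R_2 respectively such that, writing x = A(R), some agent i satisfies c_i(x_i) ≥ (4/3)·MMS_i. -/
/-- The maxmin share of an agent with cost vector `c` over `m` items,
with respect to partitions into `n` (possibly empty) bundles. -/
noncomputable def MMS (n m : ℕ) (c : Fin m → ℝ) : ℝ :=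
  ⨅ P : Fin m → Fin n, ⨆ k : Fin n, ∑ j ∈ Finset.univ.filter (fun j => P j = k), c j

/-!
Let both agents report the same ranking, so that the algorithm commits to an allocation before
either of two cost vectors is revealed, each of which splits evenly into two bundles. If the owner
of the top chore gets another chore, the costs `3, 1, 1, 1` make that agent pay at least `4` against
a maxmin share of `3`. Otherwise the other agent gets the remaining three chores and, under unit
costs, pays `3` against a maxmin share of `2`.
-/

theorem sum_filter_comp_equiv {ι κ β M : Type*} [Fintype ι] [Fintype κ] [DecidableEq β]
    [AddCommMonoid M] (e : ι ≃ κ) (P : κ → β) (c : κ → M) (b : β) :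
    ∑ i with P (e i) = b, c (e i) = ∑ j with P j = b, c j := by
  simp only [Finset.sum_filter]
  exact e.sum_comp fun j => if P j = b then c j else 0

theorem add_le_sum_filter_eq {ι β M : Type*} [Fintype ι] [DecidableEq β] [AddCommMonoid M]
    [PartialOrder M] [IsOrderedAddMonoid M] {x : ι → β} {c : ι → M} (hc : ∀ j, 0 ≤ c j)
    {j k : ι} (hjk : j ≠ k) (hx : x k = x j) :
    c j + c k ≤ ∑ i with x i = x j, c i :=
  Finset.add_le_sum (fun i _ => hc i) (by simp) (by simpa using hx) hjk

theorem MMS_comp_equiv {n m : ℕ} (e : Fin m ≃ Fin m) (c : Fin m → ℝ) :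
    MMS n m (c ∘ e) = MMS n m c := by
  unfold MMS
  rw [← (e.symm.arrowCongr (Equiv.refl (Fin n))).iInf_comp]
  exact iInf_congr fun P => iSup_congr fun k => sum_filter_comp_equiv e P c k

theorem MMS_eq_of_forall_bundle_eq {n m : ℕ} [NeZero n] {c : Fin m → ℝ} {b : ℝ}
    (P : Fin m → Fin n) (hP : ∀ k, ∑ j with P j = k, c j = b) : MMS n m c = b := by
  apply le_antisymm
  · exact (ciInf_le (Set.finite_range _).bddBelow P).trans (ciSup_le fun k => (hP k).le)
  · refine le_ciInf fun Q => ?_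
    have sum_eq : ∑ _k : Fin n, b = ∑ k, ∑ j with Q j = k, c j := by
      rw [Finset.sum_fiberwise, ← Finset.sum_fiberwise Finset.univ P c]
      exact Finset.sum_congr rfl fun k _ => (hP k).symm
    obtain ⟨k, -, hk⟩ := Finset.exists_le_of_sum_le Finset.univ_nonempty sum_eq.le
    exact hk.trans (le_ciSup (f := fun k => ∑ j with Q j = k, c j) (Set.finite_range _).bddAbove k)

theorem MMS_one (n m : ℕ) [NeZero n] : MMS n (n * m) 1 = m := by
  refine MMS_eq_of_forall_bundle_eq Fin.divNat fun k => ?_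
  rw [← sum_filter_comp_equiv finProdFinEquiv, Finset.sum_filter, Fintype.sum_prod_type]
  have divNat_eq (a : Fin n) (b : Fin m) : (finProdFinEquiv (a, b)).divNat = a :=
    congrArg Prod.fst (finProdFinEquiv.symm_apply_apply (a, b))
  simp [divNat_eq]

theorem MMS_two_cons_one (m : ℕ) : MMS 2 (m + 1) (Fin.cons (m : ℝ) 1) = m := by
  refine MMS_eq_of_forall_bundle_eq (Fin.cons 0 1) fun k => ?_
  rw [Finset.sum_filter, Fin.sum_univ_succ]
  fin_cases k <;> simp

theorem sum_filter_one_of_forall_succ_ne {m : ℕ} {x : Fin (m + 1) → Fin 2}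
    (hx : ∀ k : Fin m, x k.succ ≠ x 0) :
    ∑ j with x j = x 0 + 1, (1 : Fin (m + 1) → ℝ) j = m := by
  have x_succ (k : Fin m) : x k.succ = x 0 + 1 := by
    have := hx k
    omega
  rw [Finset.sum_filter, Fin.sum_univ_succ]
  simp [x_succ]

theorem exists_antitone_cost_of_allocation (x : Fin 4 → Fin 2) :
    ∃ c : Fin 4 → ℝ, (∀ j, 0 ≤ c j) ∧ Antitone c ∧ 0 < MMS 2 4 c ∧
      ∃ i, (4 / 3 : ℝ) * MMS 2 4 c ≤ ∑ j with x j = i, c j := by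
  by_cases shared : ∃ k : Fin 3, x k.succ = x 0
  · obtain ⟨k, hk⟩ := shared
    have mms_eq : MMS 2 4 (Fin.cons 3 1) = 3 := mod_cast MMS_two_cons_one 3
    have nonneg (j : Fin 4) : 0 ≤ (Fin.cons 3 1 : Fin 4 → ℝ) j := by
      cases j using Fin.cases <;> simp
    have anti : Antitone (Fin.cons 3 1 : Fin 4 → ℝ) := by
      refine Fin.antitone_iff_succ_le.2 fun j => ?_
      cases j using Fin.cases <;> simp
    refine ⟨Fin.cons 3 1, nonneg, anti, by simp [mms_eq], x 0, ?_⟩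
    calc (4 / 3 : ℝ) * MMS 2 4 (Fin.cons 3 1) = 3 + 1 := by rw [mms_eq]; norm_num
      _ ≤ ∑ j with x j = x 0, (Fin.cons 3 1 : Fin 4 → ℝ) j :=
        add_le_sum_filter_eq nonneg (Fin.succ_ne_zero k).symm hk
  · have mms_eq : MMS 2 4 1 = 2 := MMS_one 2 2
    refine ⟨1, fun _ => zero_le_one, antitone_const, by simp [mms_eq], x 0 + 1, ?_⟩
    rw [mms_eq, sum_filter_one_of_forall_succ_ne (not_exists.1 shared)]
    norm_num

/-- The costs `0` would satisfy the inequality trivially; a positive maxmin share excludes them. -/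
theorem ordinal_det_lower_bound_general
    (A : (Fin 2 → (Fin 4 ≃ Fin 4)) → (Fin 4 → Fin 2)) (σ : Fin 4 ≃ Fin 4) :
    ∃ c : Fin 4 → ℝ, (∀ j, 0 ≤ c j) ∧ Antitone (c ∘ σ) ∧ 0 < MMS 2 4 c ∧
      ∃ i, (4 / 3 : ℝ) * MMS 2 4 c ≤ ∑ j with A (fun _ => σ) j = i, c j := by
  obtain ⟨c, nonneg, anti, pos, i, hi⟩ :=
    exists_antitone_cost_of_allocation (A (fun _ => σ) ∘ σ)
  refine ⟨c ∘ σ.symm, fun j => nonneg _, ?_, ?_, i, ?_⟩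
  · simpa [Function.comp_assoc] using anti
  · rwa [MMS_comp_equiv]
  · rw [MMS_comp_equiv, ← sum_filter_comp_equiv σ]
    simpa using hi

/-- no deterministic ordinal algorithm for 2 agents and 4 chores has
approximation ratio smaller than 4/3.  A ranking is an equiv `R i : Fin 4 ≃ Fin 4`,
`R i k` being the item in position `k` (earlier positions have weakly larger cost).
An ordinal algorithm `A` maps a ranking profile to an allocation `Fin 4 → Fin 2`.
For every such `A` there are rankings `R` and consistent nonnegative cost vectors
`c` such that some agent's bundle costs at least `(4/3)·MMS_i`. -/
theorem ordinal_det_lower_bound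
    (A : (Fin 2 → (Fin 4 ≃ Fin 4)) → (Fin 4 → Fin 2)) :
    ∃ (R : Fin 2 → (Fin 4 ≃ Fin 4)) (c : Fin 2 → Fin 4 → ℝ),
      (∀ i j, 0 ≤ c i j) ∧
      (∀ (i : Fin 2) (k k' : Fin 4), k ≤ k' → c i (R i k') ≤ c i (R i k)) ∧
      ∃ i : Fin 2,
        (4 / 3 : ℝ) * MMS 2 4 (c i) ≤
          ∑ j ∈ Finset.univ.filter (fun j => A R j = i), c i j := by
  obtain ⟨c, nonneg, anti, -, hi⟩ := ordinal_det_lower_bound_general A (Equiv.refl _)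
  exact ⟨fun _ => Equiv.refl _, fun _ => c, fun _ => nonneg, fun _ _ _ h => anti h, hi⟩
end

section
/- Let n ≥ 2 be an even integer and let m be an integer with m ≥ 4n and 2·log₂(m/n) ≤ n, and set K = 2·log₂(m/n). Then there exist nonnegative integers a_1,…,a_n with ∑_{i=1}^n a_i = m such that a_i = 2 for every i ≤ n/2, and a_i ≤ ⌈K⌉·⌈(a_1+…+a_{i−1})/n⌉ for every i > n/2. -/
/-! Give each of the first `n / 2` agents `2` chores and every later agent as many as the cap
allows; the prefix sums reach `n` at the halfway point. From there each step multiplies the prefix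
sum by at least `1 + K / n ≥ 2 ^ (K / n)`, because `2 ^ x ≤ 1 + x` on `[0, 1]`, so the `n / 2`
remaining steps bring it to at least `n * 2 ^ (K / 2) = m`. Truncating the prefix sums at `m` makes
the total exactly `m` and respects the caps: the truncated and the untruncated prefix sum agree
before the cut, and later quotas are `0`. -/

open Finset

section Greedy

/-- Prefix sums of the sequence that always takes the largest term allowed, where `c i s` is the cap
on term `i` when the terms before it add up to `s`. -/
def greedySum {M : Type*} [AddZeroClass M] (c : ℕ → M → M) : ℕ → M
  | 0 => 0
  | i + 1 => greedySum c i + c i (greedySum c i)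

variable {M : Type*} [AddCommMonoid M] [LinearOrder M] [CanonicallyOrderedAdd M]

lemma greedySum_monotone (c : ℕ → M → M) : Monotone (greedySum c) :=
  monotone_nat_of_le_succ fun _ => le_self_add

variable [Sub M] [OrderedSub M] {c : ℕ → M → M} {m : M} {i : ℕ}

/-- The terms of the greedy sequence for the caps `c`, cut so that the total does not exceed `m`:
they are the increments of the prefix sums truncated at `m`. -/
def greedyQuota (c : ℕ → M → M) (m : M) (i : ℕ) : M :=
  min (greedySum c (i + 1)) m - min (greedySum c i) m

lemma greedyQuota_le : greedyQuota c m i ≤ c i (min (greedySum c i) m) := by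
  rw [greedyQuota, tsub_le_iff_left]
  rcases le_total (greedySum c i) m with h | h
  · rw [min_eq_left h]
    exact min_le_left _ _
  · rw [min_eq_right h]
    exact (min_le_right _ _).trans le_self_add

variable [AddLeftReflectLE M]

lemma sum_range_greedyQuota (c : ℕ → M → M) (m : M) (i : ℕ) :
    ∑ j ∈ range i, greedyQuota c m j = min (greedySum c i) m := by
  have hmono : Monotone fun j => min (greedySum c j) m :=
    (greedySum_monotone c).min monotone_const
  exact (sum_range_tsub hmono i).trans (by simp [greedySum])

lemma greedyQuota_of_greedySum_le (h : greedySum c (i + 1) ≤ m) :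
    greedyQuota c m i = c i (greedySum c i) := by
  have hi : greedySum c i ≤ m := (greedySum_monotone c i.le_succ).trans h
  rw [greedyQuota, min_eq_left h, min_eq_left hi, greedySum, add_tsub_cancel_left]

end Greedy

/-- The cap used by SeqPick on the quota of agent `i` (counted from `0`) when the agents before it
take `s` chores in total; the natural number `k` stands for `⌈K⌉`. -/
noncomputable def quotaCap (n k i s : ℕ) : ℕ :=
  if i < n / 2 then 2 else k * ⌈(s / n : ℝ)⌉₊

lemma quotaCap_of_lt_half {n i : ℕ} (hi : i < n / 2) (k s : ℕ) : quotaCap n k i s = 2 :=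
  if_pos hi

lemma quotaCap_of_half_le {n i : ℕ} (hi : n / 2 ≤ i) (k s : ℕ) :
    quotaCap n k i s = k * ⌈(s / n : ℝ)⌉₊ :=
  if_neg hi.not_gt

lemma greedySum_quotaCap_of_le_half {n k i : ℕ} (hi : i ≤ n / 2) :
    greedySum (quotaCap n k) i = 2 * i := by
  induction i with
  | zero => rfl
  | succ i ih => rw [greedySum, quotaCap_of_lt_half hi, ih (by omega), mul_add_one]

lemma greedySum_quotaCap_succ_of_half_le {n k i : ℕ} (hi : n / 2 ≤ i) :
    greedySum (quotaCap n k) (i + 1) =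
      greedySum (quotaCap n k) i + k * ⌈(greedySum (quotaCap n k) i / n : ℝ)⌉₊ := by
  rw [greedySum, quotaCap_of_half_le hi]

lemma two_rpow_div_mul_le_add_mul_ceil {s k x y : ℝ} (hs : 0 ≤ s) (hx : 0 ≤ x) (hxk : x ≤ k)
    (hxy : x ≤ y) : 2 ^ (x / y) * s ≤ s + k * ⌈s / y⌉₊ := by
  have hy : 0 ≤ y := hx.trans hxy
  have htwo : (2 : ℝ) ^ (x / y) ≤ 1 + x / y := by
    simpa only [one_add_one_eq_two, mul_one] using rpow_one_add_le_one_add_mul_self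
      (s := 1) (by norm_num) (div_nonneg hx hy) (div_le_one_of_le₀ hxy hy)
  calc 2 ^ (x / y) * s ≤ (1 + x / y) * s := by gcongr
    _ = s + x * (s / y) := by ring
    _ ≤ s + k * ⌈s / y⌉₊ := by
      gcongr
      · exact hx.trans hxk
      · exact Nat.le_ceil _

lemma two_rpow_div_pow_mul_le_greedySum_quotaCap {n k : ℕ} {K : ℝ} (hK : 0 ≤ K) (hKk : K ≤ k)
    (hKn : K ≤ n) (t : ℕ) :
    ((2 : ℝ) ^ (K / n)) ^ t * (2 * (n / 2 : ℕ)) ≤ greedySum (quotaCap n k) (n / 2 + t) := by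
  have hhalf : ((greedySum (quotaCap n k) (n / 2) : ℕ) : ℝ) = 2 * (n / 2 : ℕ) := by
    exact_mod_cast greedySum_quotaCap_of_le_half le_rfl
  rw [← hhalf]
  refine geom_le (u := fun t => (greedySum (quotaCap n k) (n / 2 + t) : ℕ)) (by positivity) t
    fun t _ => ?_
  rw [← add_assoc, greedySum_quotaCap_succ_of_half_le (Nat.le_add_right _ t), Nat.cast_add,
    Nat.cast_mul]
  exact two_rpow_div_mul_le_add_mul_ceil (Nat.cast_nonneg _) hK hKk hKn

lemma mul_two_rpow_half_le_greedySum_quotaCap {n k : ℕ} {K : ℝ} (heven : Even n) (hK : 0 ≤ K)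
    (hKk : K ≤ k) (hKn : K ≤ n) : n * (2 : ℝ) ^ (K / 2) ≤ greedySum (quotaCap n k) n := by
  obtain ⟨h, rfl⟩ := heven.two_dvd
  rcases h.eq_zero_or_pos with rfl | hh
  · simp
  have hgrowth := two_rpow_div_pow_mul_le_greedySum_quotaCap hK hKk hKn h
  have hexp : K / (2 * h : ℕ) * h = K / 2 := by
    push_cast
    field_simp
  rw [← Real.rpow_mul_natCast zero_le_two, hexp, Nat.mul_div_cancel_left h two_pos, ← two_mul,
    mul_comm] at hgrowth
  exact_mod_cast hgrowth

lemma sum_filter_lt_fin_eq_sum_range {M : Type*} [AddCommMonoid M] {n : ℕ} (f : ℕ → M)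
    (i : Fin n) : ∑ j with j < i, f j = ∑ j ∈ range i, f j := by
  rw [filter_gt_eq_Iio, ← Nat.Iio_eq_range, ← Fin.map_valEmbedding_Iio, sum_map]
  rfl

theorem seqPick_quota_exists_general (n m : ℕ) (hn : 0 < n) (heven : Even n) (hm : n ≤ m)
    (hKn : 2 * Real.logb 2 ((m : ℝ) / (n : ℝ)) ≤ (n : ℝ)) :
    ∃ a : Fin n → ℕ,
      (∑ i, a i) = m ∧
      (∀ i : Fin n, (i : ℕ) < n / 2 → a i = 2) ∧
      (∀ i : Fin n, n / 2 ≤ (i : ℕ) →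
        (a i : ℝ) ≤
          (⌈2 * Real.logb 2 ((m : ℝ) / (n : ℝ))⌉ : ℝ) *
            (⌈(∑ j ∈ Finset.univ.filter (fun j => j < i), a j : ℝ) / (n : ℝ)⌉ : ℝ)) := by
  have hn' : (0 : ℝ) < n := by exact_mod_cast hn
  have hratio : (1 : ℝ) ≤ m / n := (one_le_div hn').2 (by exact_mod_cast hm)
  set K := 2 * Real.logb 2 ((m : ℝ) / n) with hKdef
  have hK : 0 ≤ K := mul_nonneg zero_le_two (Real.logb_nonneg one_lt_two hratio)
  have hm_eq : n * (2 : ℝ) ^ (K / 2) = m := by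
    rw [hKdef, mul_div_cancel_left₀ _ two_ne_zero, Real.rpow_logb two_pos (by norm_num)
      (by positivity), mul_div_cancel₀ _ hn'.ne']
  set c := quotaCap n ⌈K⌉₊
  have hreach : m ≤ greedySum c n := by
    exact_mod_cast hm_eq.symm.trans_le
      (mul_two_rpow_half_le_greedySum_quotaCap heven hK (Nat.le_ceil K) hKn)
  refine ⟨fun i => greedyQuota c m i, ?_, fun i hi => ?_, fun i hi => ?_⟩
  · rw [Fin.sum_univ_eq_sum_range, sum_range_greedyQuota, min_eq_right hreach]
  · have hle : greedySum c (i + 1) ≤ m := by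
      rw [greedySum_quotaCap_of_le_half hi]
      omega
    exact (greedyQuota_of_greedySum_le hle).trans (quotaCap_of_lt_half hi _ _)
  · rw [← Nat.cast_sum, sum_filter_lt_fin_eq_sum_range, sum_range_greedyQuota,
      ← natCast_ceil_eq_intCast_ceil hK, ← natCast_ceil_eq_intCast_ceil (by positivity)]
    exact_mod_cast greedyQuota_le.trans_eq (quotaCap_of_half_le hi _ _)

/-- existence of the quota sequence used by SeqPick.  Let `n ≥ 2` be
even, `m ≥ 4n`, `2·log₂(m/n) ≤ n`, and `K = 2·log₂(m/n)`.  Then there are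
nonnegative integers `a 0, …, a (n-1)` summing to `m` with `a i = 2` for the first
`n/2` agents and `a i ≤ ⌈K⌉·⌈(a 0 + … + a (i-1))/n⌉` for the remaining agents. -/
theorem seqPick_quota_exists (n m : ℕ) (hn : 2 ≤ n) (heven : Even n)
    (hm : 4 * n ≤ m)
    (hKn : 2 * Real.logb 2 ((m : ℝ) / (n : ℝ)) ≤ (n : ℝ)) :
    ∃ a : Fin n → ℕ,
      (∑ i, a i) = m ∧
      (∀ i : Fin n, (i : ℕ) < n / 2 → a i = 2) ∧
      (∀ i : Fin n, n / 2 ≤ (i : ℕ) →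
        (a i : ℝ) ≤
          (⌈2 * Real.logb 2 ((m : ℝ) / (n : ℝ))⌉ : ℝ) *
            (⌈(∑ j ∈ Finset.univ.filter (fun j => j < i), a j : ℝ) / (n : ℝ)⌉ : ℝ)) := by
  exact seqPick_quota_exists_general n m (by omega) heven (by omega) hKn
end

section
/- Suppose an agent picks her a cheapest items from a remaining pool, with s items left over; then her cost is at most (a/⌈s/n⌉) times her maxmin share. Precisely: let agent i have additive nonnegative costs c_{ij} on the item set M (with maxmin share MMS_i defined with respect to partitions into n bundles), let R ⊆ M with |R| = a + s where a ≥ 1 and s ≥ 1, and let S ⊆ R with |S| = a be such that c_{ij} ≤ c_{ij'} for every j ∈ S and j' ∈ R∖S. Then c_i(S) ≤ (a/⌈s/n⌉)·MMS_i. -/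
/-! Every picked item costs at most as much as each of the `s` items left over. In any partition
into `n` bundles some bundle receives at least `⌈s / n⌉` of the leftover items, so its cost is at
least `⌈s / n⌉` times the cost of any single picked item. Hence each picked item costs at most
`MMS / ⌈s / n⌉`, and there are `a` of them. -/

section Pigeonhole

variable {α β K : Type*} [DecidableEq β] [Field K] [LinearOrder K] [IsStrictOrderedRing K]
  [FloorRing K] {s : Finset α} {t : Finset β} {f : α → β}

theorem exists_ceil_card_div_card_le_card_fiber (hf : ∀ x ∈ s, f x ∈ t) (ht : t.Nonempty) :
    ∃ y ∈ t, ⌈(s.card : K) / t.card⌉ ≤ ((s.filter fun x => f x = y).card : ℤ) := by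
  have ht₀ : (t.card : K) ≠ 0 := Nat.cast_ne_zero.2 ht.card_ne_zero
  have havg : t.card • ((s.card : K) / t.card) ≤ s.card := by
    rw [nsmul_eq_mul, mul_div_cancel₀ _ ht₀]
  obtain ⟨y, hy, hcard⟩ := Finset.exists_le_card_fiber_of_nsmul_le_card_of_maps_to hf ht havg
  exact ⟨y, hy, Int.ceil_le.2 (by rwa [Int.cast_natCast])⟩

theorem exists_ceil_card_div_card_mul_le_sum_fiber {w : α → K} {b : K}
    (hf : ∀ x ∈ s, f x ∈ t) (ht : t.Nonempty) (hb : 0 ≤ b) (hw : ∀ x ∈ s, b ≤ w x) :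
    ∃ y ∈ t, (⌈(s.card : K) / t.card⌉ : K) * b ≤ ∑ x ∈ s.filter (fun x => f x = y), w x := by
  obtain ⟨y, hy, hcard⟩ := exists_ceil_card_div_card_le_card_fiber (K := K) hf ht
  refine ⟨y, hy, ?_⟩
  calc (⌈(s.card : K) / t.card⌉ : K) * b
      ≤ ((s.filter fun x => f x = y).card : K) * b := by
        gcongr
        exact_mod_cast hcard
    _ = (s.filter fun x => f x = y).card • b := (nsmul_eq_mul _ _).symm
    _ ≤ ∑ x ∈ s.filter (fun x => f x = y), w x :=
        Finset.card_nsmul_le_sum _ _ _ fun x hx => hw x (Finset.mem_of_mem_filter x hx)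

end Pigeonhole

section MaxminShare

variable {n m : ℕ} {c : Fin m → ℝ}

theorem le_MMS_of_forall_exists_le_sum {x : ℝ} (hn : 0 < n)
    (h : ∀ P : Fin m → Fin n, ∃ k, x ≤ ∑ j ∈ Finset.univ.filter (fun j => P j = k), c j) :
    x ≤ MMS n m c := by
  have : NeZero n := ⟨hn.ne'⟩
  refine le_ciInf fun P => ?_
  obtain ⟨k, hk⟩ := h P
  exact le_ciSup_of_le (Set.finite_range _).bddAbove k hk

theorem ceil_card_div_mul_le_MMS (hn : 0 < n) (hc : ∀ j, 0 ≤ c j) {T : Finset (Fin m)} {b : ℝ}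
    (hb : 0 ≤ b) (hT : ∀ j ∈ T, b ≤ c j) :
    (⌈(T.card : ℝ) / n⌉ : ℝ) * b ≤ MMS n m c := by
  have : NeZero n := ⟨hn.ne'⟩
  refine le_MMS_of_forall_exists_le_sum hn fun P => ?_
  obtain ⟨k, -, hk⟩ := exists_ceil_card_div_card_mul_le_sum_fiber
    (fun j _ => Finset.mem_univ (P j)) Finset.univ_nonempty hb hT
  rw [Finset.card_fin] at hk
  exact ⟨k, hk.trans <| Finset.sum_le_sum_of_subset_of_nonneg
    (Finset.filter_subset_filter _ (Finset.subset_univ T)) fun j _ _ => hc j⟩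

end MaxminShare

/-- if an agent picks her `a` cheapest items `S` from a pool `R`
with `s` items left over, her cost is at most `(a/⌈s/n⌉)` times her maxmin share. -/
theorem pick_cheapest_cost_bound (n m : ℕ) (hn : 0 < n)
    (c : Fin m → ℝ) (hc : ∀ j, 0 ≤ c j)
    (R S : Finset (Fin m)) (a s : ℕ) (ha : 1 ≤ a) (hs : 1 ≤ s)
    (hRcard : R.card = a + s) (hSR : S ⊆ R) (hScard : S.card = a)
    (hcheap : ∀ j ∈ S, ∀ j' ∈ R \ S, c j ≤ c j') :
    ∑ j ∈ S, c j ≤ ((a : ℝ) / (⌈(s : ℝ) / (n : ℝ)⌉ : ℝ)) * MMS n m c := by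
  have hleft : (R \ S).card = s := by
    rw [Finset.card_sdiff_of_subset hSR, hRcard, hScard, Nat.add_sub_cancel_left]
  have hceil : (0 : ℝ) < ⌈(s : ℝ) / (n : ℝ)⌉ := Int.cast_pos.2 (Int.ceil_pos.2 (by positivity))
  have hitem : ∀ j ∈ S, c j ≤ MMS n m c / ⌈(s : ℝ) / (n : ℝ)⌉ := fun j hj => by
    rw [le_div_iff₀' hceil, ← hleft]
    exact ceil_card_div_mul_le_MMS hn hc (hc j) (hcheap j hj)
  calc ∑ j ∈ S, c j ≤ S.card • (MMS n m c / ⌈(s : ℝ) / (n : ℝ)⌉) :=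
        Finset.sum_le_card_nsmul S c _ hitem
    _ = ((a : ℝ) / (⌈(s : ℝ) / (n : ℝ)⌉ : ℝ)) * MMS n m c := by
        rw [hScard, nsmul_eq_mul]
        ring
end

section
/- Limits of sequential picking: let m > n ≥ 2 be integers with log₂(m/n) ≤ 2n and set K = (1/4)·log₂(m/n). Then for every sequence of nonnegative integers a_1,…,a_n with ∑_{i=1}^n a_i = m there exists an index i such that a_i ≥ K·⌈(a_1+…+a_i)/n⌉. -/
/-!
Suppose every quota satisfies `a i < K⌈S i / n⌉`, where `S i` is the `i`-th partial sum. Since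
`⌈S i / n⌉ ≤ (S i + n) / n`, each agent contributes at most the fraction `K / n` of the shifted
partial sum `S i + n`. Undoing the `n` steps from `m + n` down to the empty sum therefore gives
`(m + n) (1 - K / n) ^ n ≤ n`. On the other hand `1 - t / 4 ≥ 2 ^ (-t)` for `t = log₂ (m / n) / n`,
so that `(1 - K / n) ^ n ≥ n / m`, a contradiction.
-/

section PartialSums

variable {ι 𝕜 : Type*} [LinearOrder ι]

lemma sum_add_mul_one_sub_pow_card_le [CommRing 𝕜] [PartialOrder 𝕜] [IsOrderedRing 𝕜]
    (s : Finset ι) (a : ι → 𝕜) {c q : 𝕜} (hq : q ≤ 1)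
    (h : ∀ i ∈ s, a i ≤ q * (∑ j ∈ s with j ≤ i, a j + c)) :
    (∑ i ∈ s, a i + c) * (1 - q) ^ s.card ≤ c := by
  induction s using Finset.induction_on_max with
  | empty => simp
  | insert k s hlt ih =>
    have hk : k ∉ s := fun hks => (hlt k hks).false
    have hinit : (∑ i ∈ s, a i + c) * (1 - q) ^ s.card ≤ c := by
      refine ih fun i hi => ?_
      simpa [Finset.filter_insert, (hlt i hi).not_ge] using h i (Finset.mem_insert_of_mem hi)
    have hlast : (∑ i ∈ insert k s, a i + c) * (1 - q) ≤ ∑ i ∈ s, a i + c := by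
      have hall : {j ∈ insert k s | j ≤ k} = insert k s :=
        Finset.filter_true_of_mem (by simpa using fun j hj => (hlt j hj).le)
      have hle := h k (Finset.mem_insert_self k s)
      rw [hall, Finset.sum_insert hk] at hle
      rw [Finset.sum_insert hk]
      linear_combination hle
    calc (∑ i ∈ insert k s, a i + c) * (1 - q) ^ (insert k s).card
        = (∑ i ∈ insert k s, a i + c) * (1 - q) * (1 - q) ^ s.card := by
          rw [Finset.card_insert_of_notMem hk, pow_succ', mul_assoc]
      _ ≤ (∑ i ∈ s, a i + c) * (1 - q) ^ s.card :=
          mul_le_mul_of_nonneg_right hlast (pow_nonneg (sub_nonneg.2 hq) _)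
      _ ≤ c := hinit

lemma exists_mul_ceil_sum_div_le [Field 𝕜] [LinearOrder 𝕜] [IsStrictOrderedRing 𝕜] [FloorRing 𝕜]
    (s : Finset ι) (a : ι → 𝕜) {c K : 𝕜} (hc : 0 < c) (hK : 0 ≤ K) (hKc : K ≤ c)
    (h : c < (∑ i ∈ s, a i + c) * (1 - K / c) ^ s.card) :
    ∃ i ∈ s, K * ⌈(∑ j ∈ s with j ≤ i, a j) / c⌉ ≤ a i := by
  by_contra! hlt
  refine h.not_ge (sum_add_mul_one_sub_pow_card_le s a ((div_le_one hc).2 hKc) fun i hi => ?_)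
  calc a i ≤ K * ⌈(∑ j ∈ s with j ≤ i, a j) / c⌉ := (hlt i hi).le
    _ ≤ K * ((∑ j ∈ s with j ≤ i, a j) / c + 1) :=
        mul_le_mul_of_nonneg_left (Int.ceil_lt_add_one _).le hK
    _ = K / c * (∑ j ∈ s with j ≤ i, a j + c) := by field_simp

end PartialSums

lemma one_le_two_rpow_mul_one_sub_div_four {t : ℝ} (h0 : 0 ≤ t) (h3 : t ≤ 3) :
    1 ≤ (2 : ℝ) ^ t * (1 - t / 4) := by
  have bernoulli : (1 / 4 : ℝ) ^ (t / 3) ≤ 1 - t / 4 :=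
    calc (1 / 4 : ℝ) ^ (t / 3) = (1 + -3 / 4) ^ (t / 3) := by norm_num
      _ ≤ 1 + t / 3 * (-3 / 4) :=
          rpow_one_add_le_one_add_mul_self (by norm_num) (by positivity) (by linarith)
      _ = 1 - t / 4 := by ring
  calc (1 : ℝ) ≤ 2 ^ (t / 3) := Real.one_le_rpow one_le_two (by positivity)
    _ = (8 * (1 / 4)) ^ (t / 3) := by norm_num
    _ = 8 ^ (t / 3) * (1 / 4) ^ (t / 3) := Real.mul_rpow (by norm_num) (by norm_num)
    _ = 2 ^ t * (1 / 4) ^ (t / 3) := by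
        rw [show (8 : ℝ) = 2 ^ (3 : ℝ) by norm_num, ← Real.rpow_mul zero_le_two,
          mul_div_cancel₀ t three_ne_zero]
    _ ≤ 2 ^ t * (1 - t / 4) := mul_le_mul_of_nonneg_left bernoulli (by positivity)

lemma one_le_mul_one_sub_logb_div_pow {x : ℝ} {n : ℕ} (hn : n ≠ 0) (hx : 1 ≤ x)
    (hlog : Real.logb 2 x ≤ 3 * n) :
    1 ≤ x * (1 - 1 / 4 * Real.logb 2 x / n) ^ n := by
  have hn0 : (0 : ℝ) < n := by positivity
  have hroot : ((2 : ℝ) ^ (Real.logb 2 x / n)) ^ n = x := by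
    rw [← Real.rpow_mul_natCast zero_le_two, div_mul_cancel₀ _ hn0.ne',
      Real.rpow_logb two_pos (by norm_num) (by positivity)]
  calc (1 : ℝ) ≤ (2 ^ (Real.logb 2 x / n) * (1 - Real.logb 2 x / n / 4)) ^ n :=
        one_le_pow₀ (one_le_two_rpow_mul_one_sub_div_four
          (div_nonneg (Real.logb_nonneg one_lt_two hx) hn0.le) ((div_le_iff₀ hn0).2 hlog))
    _ = x * (1 - 1 / 4 * Real.logb 2 x / n) ^ n := by
        rw [mul_pow, hroot]
        ring

theorem seqPick_limit_general {ι : Type*} [LinearOrder ι] (s : Finset ι) (a : ι → ℝ)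
    (hsum : s.card < ∑ i ∈ s, a i)
    (hlog : Real.logb 2 ((∑ i ∈ s, a i) / s.card) ≤ 3 * s.card) :
    ∃ i ∈ s, 1 / 4 * Real.logb 2 ((∑ i ∈ s, a i) / s.card) *
      ⌈(∑ j ∈ s with j ≤ i, a j) / s.card⌉ ≤ a i := by
  have hs : s.card ≠ 0 := by
    intro h
    simp [Finset.card_eq_zero.1 h] at hsum
  have hn : (0 : ℝ) < s.card := by positivity
  have hone : 1 < (∑ i ∈ s, a i) / s.card := (one_lt_div hn).2 hsum
  have hpow := one_le_mul_one_sub_logb_div_pow hs hone.le hlog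
  have hK : 0 < 1 / 4 * Real.logb 2 ((∑ i ∈ s, a i) / s.card) :=
    mul_pos (by norm_num) (Real.logb_pos one_lt_two hone)
  have hKn : 1 / 4 * Real.logb 2 ((∑ i ∈ s, a i) / s.card) < s.card := by linarith
  set K := 1 / 4 * Real.logb 2 ((∑ i ∈ s, a i) / s.card)
  refine exists_mul_ceil_sum_div_le s a hn hK.le hKn.le ?_
  have hpos : 0 < 1 - K / s.card := sub_pos.2 ((div_lt_one hn).2 hKn)
  calc (s.card : ℝ) ≤ s.card * ((∑ i ∈ s, a i) / s.card * (1 - K / s.card) ^ s.card) :=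
        le_mul_of_one_le_right hn.le hpow
    _ = (∑ i ∈ s, a i) * (1 - K / s.card) ^ s.card := by field_simp
    _ < (∑ i ∈ s, a i + s.card) * (1 - K / s.card) ^ s.card :=
        mul_lt_mul_of_pos_right (lt_add_of_pos_right _ hn) (by positivity)

/-- limits of sequential picking.  Let `m > n ≥ 2` with
`log₂(m/n) ≤ 2n` and `K = (1/4)·log₂(m/n)`.  Then for every sequence of
nonnegative integer quotas summing to `m` there is an index `i` with
`a i ≥ K·⌈(a 0 + … + a i)/n⌉`. -/
theorem seqPick_limit (n m : ℕ) (hn : 2 ≤ n) (hm : n < m)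
    (hlog : Real.logb 2 ((m : ℝ) / (n : ℝ)) ≤ 2 * (n : ℝ))
    (a : Fin n → ℕ) (hsum : ∑ i, a i = m) :
    ∃ i : Fin n,
      (1 / 4 : ℝ) * Real.logb 2 ((m : ℝ) / (n : ℝ)) *
          (⌈(∑ j ∈ Finset.univ.filter (fun j => j ≤ i), a j : ℝ) / (n : ℝ)⌉ : ℝ) ≤
        (a i : ℝ) := by
  have hsum_cast : ∑ i, (a i : ℝ) = m := by exact_mod_cast hsum
  simpa [hsum_cast] using seqPick_limit_general Finset.univ (fun i => (a i : ℝ))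
    (by simpa [hsum_cast] using hm) (by simpa [hsum_cast] using hlog.trans (by gcongr; norm_num))
end

section
/- No randomized ordinal allocation algorithm for 2 agents and 4 chores has expected approximation ratio smaller than 6/5: for every function A mapping pairs of rankings of the 4 items to probability distributions over allocations, there exist a profile of rankings R = (R_1, R_2) and cost vectors c_1, c_2 consistent with R_1 and R_2 respectively such that E_{x ∼ A(R)}[max_{i∈{1,2}} c_i(x_i)/MMS_i] ≥ 6/5. -/
lemma ciSup_fin_two {α : Type*} [ConditionallyCompleteLattice α] (f : Fin 2 → α) :
    ⨆ i, f i = f 0 ⊔ f 1 := by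
  have hrange : Set.range f = {f 0, f 1} := by
    ext
    simp [Fin.exists_fin_two, eq_comm]
  exact IsLUB.ciSup_eq (hrange ▸ isLUB_pair)

lemma exists_card_fiber_le {α β : Type*} [Fintype α] [Fintype β] [DecidableEq β] {q : ℕ}
    (h : Fintype.card α ≤ Fintype.card β * q) :
    ∃ f : α → β, ∀ b, Finset.card {a | f a = b} ≤ q := by
  obtain ⟨e⟩ : Nonempty (α ↪ β × Fin q) :=
    Function.Embedding.nonempty_of_card_le (by simpa using h)
  refine ⟨fun a => (e a).1, fun b => ?_⟩
  have hinj : Set.InjOn (fun a => (e a).2) ({a | (e a).1 = b} : Finset α) := by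
    intro a ha a' ha' haa'
    simp only [Finset.coe_filter_univ, Set.mem_ofPred_eq] at ha ha'
    exact e.injective (Prod.ext (ha.trans ha'.symm) haa')
  simpa using Finset.card_le_card_of_injOn _ (fun a _ => Finset.mem_univ _) hinj

lemma le_sum_mul_or_le_sum_mul {ι : Type*} [Fintype ι] {p f g : ι → ℝ} {a b r : ℝ}
    (hp : ∀ x, 0 ≤ p x) (hsum : ∑ x, p x = 1) (ha : 0 < a) (hb : 0 < b)
    (h : ∀ x, r * (a + b) ≤ a * f x + b * g x) :
    r ≤ ∑ x, p x * f x ∨ r ≤ ∑ x, p x * g x := by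
  have hmix : r * (a + b) ≤ a * ∑ x, p x * f x + b * ∑ x, p x * g x :=
    calc r * (a + b) = ∑ x, p x * (r * (a + b)) := by rw [← Finset.sum_mul, hsum, one_mul]
      _ ≤ ∑ x, p x * (a * f x + b * g x) :=
        Finset.sum_le_sum fun x _ => mul_le_mul_of_nonneg_left (h x) (hp x)
      _ = a * ∑ x, p x * f x + b * ∑ x, p x * g x := by
        simp only [mul_add, Finset.sum_add_distrib, Finset.mul_sum, mul_left_comm]
  by_contra! hlt
  obtain ⟨hf, hg⟩ := hlt
  linarith [mul_lt_mul_of_pos_left hf ha, mul_lt_mul_of_pos_left hg hb]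

section Makespan

variable {n m : ℕ}

/-- The makespan of an allocation under a cost vector common to all agents: the largest cost of
a bundle. -/
noncomputable def makespan (c : Fin m → ℝ) (x : Fin m → Fin n) : ℝ :=
  ⨆ k, ∑ j with x j = k, c j

lemma sum_filter_le_makespan (c : Fin m → ℝ) (x : Fin m → Fin n) (k : Fin n) :
    ∑ j with x j = k, c j ≤ makespan c x :=
  le_ciSup (f := fun k => ∑ j with x j = k, c j) (Finite.bddAbove_range _) k

lemma MMS_le_makespan (c : Fin m → ℝ) (x : Fin m → Fin n) : MMS n m c ≤ makespan c x :=
  ciInf_le (f := makespan c) (Finite.bddBelow_range _) x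

lemma iSup_div_MMS_eq_makespan_div_MMS {c : Fin m → ℝ} (hc : 0 ≤ MMS n m c)
    (x : Fin m → Fin n) :
    ⨆ k, (∑ j with x j = k, c j) / MMS n m c = makespan c x / MMS n m c := by
  simp only [div_eq_mul_inv, makespan, Real.iSup_mul_of_nonneg (inv_nonneg.2 hc)]

variable [NeZero n]

lemma makespan_le {c : Fin m → ℝ} {x : Fin m → Fin n} {v : ℝ}
    (h : ∀ k, ∑ j with x j = k, c j ≤ v) : makespan c x ≤ v :=
  ciSup_le h

variable (n) in
lemma exists_makespan_eq_MMS (c : Fin m → ℝ) :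
    ∃ x : Fin m → Fin n, makespan c x = MMS n m c :=
  exists_eq_ciInf_of_finite

lemma MMS_pos {c : Fin m → ℝ} (hc : 0 ≤ c) (hc' : ∃ j, c j ≠ 0) : 0 < MMS n m c := by
  obtain ⟨x, hx⟩ := exists_makespan_eq_MMS n c
  obtain ⟨j, hj⟩ := hc'
  calc 0 < c j := (hc j).lt_of_ne' hj
    _ ≤ ∑ i with x i = x j, c i :=
      Finset.single_le_sum (fun i _ => hc i) (Finset.mem_filter_univ j |>.2 rfl)
    _ ≤ makespan c x := sum_filter_le_makespan c x (x j)
    _ = MMS n m c := hx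

lemma MMS_vecCons_le_max (h : ℝ) (c : Fin m → ℝ) :
    MMS (n + 1) (m + 1) (Matrix.vecCons h c) ≤ max h (MMS n m c) := by
  obtain ⟨x, hx⟩ := exists_makespan_eq_MMS n c
  refine (MMS_le_makespan _ (Matrix.vecCons 0 fun j => (x j).succ)).trans (makespan_le fun k => ?_)
  cases k using Fin.cases with
  | zero => simp [Finset.sum_filter, Fin.sum_univ_succ]
  | succ k =>
    have hk : ∑ j with x j = k, c j ≤ max h (MMS n m c) :=
      ((sum_filter_le_makespan c x k).trans_eq hx).trans (le_max_right _ _)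
    simpa [Finset.sum_filter, Fin.sum_univ_succ, (Fin.succ_ne_zero k).symm] using hk

lemma MMS_one_le {q : ℕ} (h : m ≤ n * q) : MMS n m 1 ≤ q := by
  obtain ⟨x, hx⟩ := exists_card_fiber_le (α := Fin m) (β := Fin n) (by simpa using h)
  exact (MMS_le_makespan 1 x).trans (makespan_le fun k => by simpa using hx k)

end Makespan

lemma sum_le_makespan_add_mul_makespan {n m : ℕ} {c d : Fin m → ℝ} {i : Fin m}
    (hcd : ∀ j ≠ i, c j = d j) (x : Fin m → Fin (n + 1)) :
    ∑ j, c j ≤ makespan c x + n * makespan d x := by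
  have hothers : ∀ k ∈ Finset.univ.erase (x i),
      ∑ j with x j = k, c j = ∑ j with x j = k, d j := by
    intro k hk
    refine Finset.sum_congr rfl fun j hj => hcd j ?_
    rintro rfl
    exact Finset.ne_of_mem_erase hk (Finset.mem_filter_univ j |>.1 hj).symm
  calc ∑ j, c j = ∑ k, ∑ j with x j = k, c j := (Finset.sum_fiberwise _ _ _).symm
    _ = ∑ j with x j = x i, c j + ∑ k ∈ Finset.univ.erase (x i), ∑ j with x j = k, c j :=
      (Finset.add_sum_erase _ _ (Finset.mem_univ _)).symm
    _ = ∑ j with x j = x i, c j + ∑ k ∈ Finset.univ.erase (x i), ∑ j with x j = k, d j := by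
      rw [Finset.sum_congr rfl hothers]
    _ ≤ makespan c x + ∑ _k ∈ Finset.univ.erase (x i), makespan d x :=
      add_le_add (sum_filter_le_makespan c x _)
        (Finset.sum_le_sum fun k _ => sum_filter_le_makespan d x k)
    _ = makespan c x + n * makespan d x := by simp

lemma sum_div_le_expected_ratio_or {n m : ℕ} {p : (Fin m → Fin (n + 1)) → ℝ}
    (hp : ∀ x, 0 ≤ p x) (hsum : ∑ x, p x = 1) (hn : 0 < n)
    {c d : Fin m → ℝ} {i : Fin m} {u v : ℝ}
    (hcd : ∀ j ≠ i, c j = d j) (hc : 0 ≤ ∑ j, c j)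
    (hcpos : 0 < MMS (n + 1) m c) (hdpos : 0 < MMS (n + 1) m d)
    (hcu : MMS (n + 1) m c ≤ u) (hdv : MMS (n + 1) m d ≤ v) :
    (∑ j, c j) / (u + n * v) ≤ ∑ x, p x * (makespan c x / MMS (n + 1) m c) ∨
      (∑ j, c j) / (u + n * v) ≤ ∑ x, p x * (makespan d x / MMS (n + 1) m d) := by
  have hn' : (0 : ℝ) < n := Nat.cast_pos.2 hn
  refine le_sum_mul_or_le_sum_mul hp hsum hcpos (mul_pos hn' hdpos) fun x => ?_
  have hu : 0 < u := hcpos.trans_le hcu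
  have hv : 0 < v := hdpos.trans_le hdv
  calc (∑ j, c j) / (u + n * v) * (MMS (n + 1) m c + n * MMS (n + 1) m d)
      ≤ (∑ j, c j) / (u + n * v) * (u + n * v) := by gcongr
    _ = ∑ j, c j := div_mul_cancel₀ _ (by positivity)
    _ ≤ makespan c x + n * makespan d x := sum_le_makespan_add_mul_makespan hcd x
    _ = MMS (n + 1) m c * (makespan c x / MMS (n + 1) m c) +
        n * MMS (n + 1) m d * (makespan d x / MMS (n + 1) m d) := by field_simp

lemma exists_antitone_cost_le_expected_ratio {n m : ℕ} (hn : 0 < n) (hm : 0 < m)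
    {p : (Fin (m + 1) → Fin (n + 1)) → ℝ} (hp : ∀ x, 0 ≤ p x) (hsum : ∑ x, p x = 1) :
    ∃ c : Fin (m + 1) → ℝ, 0 ≤ c ∧ (∃ j, c j ≠ 0) ∧ Antitone c ∧
      ((m ⌈/⌉ n : ℕ) + m : ℝ) / ((m ⌈/⌉ n : ℕ) + n * ((m + 1) ⌈/⌉ (n + 1) : ℕ)) ≤
        ∑ x, p x * (makespan c x / MMS (n + 1) (m + 1) c) := by
  have : NeZero n := ⟨hn.ne'⟩
  obtain ⟨m, rfl⟩ := Nat.exists_eq_succ_of_ne_zero hm.ne'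
  set q := (m + 1) ⌈/⌉ n
  have hmq : m + 1 ≤ n * q := le_smul_ceilDiv hn
  have hq : (1 : ℝ) ≤ q := Nat.one_le_cast.2 (Nat.pos_of_mul_pos_left (hm.trans_le hmq))
  let c : Fin (m + 2) → ℝ := Matrix.vecCons q 1
  have hc0 : 0 ≤ c := Fin.cases (zero_le_one.trans hq) fun _ => zero_le_one
  have hcne : ∃ j, c j ≠ 0 := ⟨0, (zero_lt_one.trans_le hq).ne'⟩
  have hone : ∃ j, (1 : Fin (m + 2) → ℝ) j ≠ 0 := ⟨0, one_ne_zero⟩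
  have hagree : ∀ j ≠ 0, c j = (1 : Fin (m + 2) → ℝ) j :=
    Fin.cases (fun h => absurd rfl h) fun _ _ => rfl
  have hMMSc : MMS (n + 1) (m + 2) c ≤ q :=
    (MMS_vecCons_le_max (n := n) _ _).trans (max_le le_rfl (MMS_one_le hmq))
  have hMMSone : MMS (n + 1) (m + 2) 1 ≤ ((m + 2) ⌈/⌉ (n + 1) : ℕ) :=
    MMS_one_le (le_smul_ceilDiv n.succ_pos)
  have hsumc : ∑ j, c j = q + (m + 1 : ℕ) := by simp [c, Fin.sum_univ_succ]
  rw [← hsumc]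
  rcases sum_div_le_expected_ratio_or hp hsum hn hagree
    (Finset.sum_nonneg fun j _ => hc0 j) (MMS_pos hc0 hcne) (MMS_pos zero_le_one hone)
    hMMSc hMMSone with h | h
  · exact ⟨c, hc0, hcne, antitone_vecCons.2 ⟨hq, antitone_const⟩, h⟩
  · exact ⟨1, zero_le_one, hone, antitone_const, h⟩

theorem ordinal_rand_lower_bound_general {n m : ℕ} (hn : 0 < n) (hm : 0 < m)
    (A : (Fin (n + 1) → (Fin (m + 1) ≃ Fin (m + 1))) → ((Fin (m + 1) → Fin (n + 1)) → ℝ))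
    (hdist : ∀ R, (∀ x, 0 ≤ A R x) ∧ ∑ x, A R x = 1) :
    ∃ (R : Fin (n + 1) → (Fin (m + 1) ≃ Fin (m + 1))) (c : Fin (n + 1) → Fin (m + 1) → ℝ),
      (∀ i j, 0 ≤ c i j) ∧
      (∀ i, ∃ j, c i j ≠ 0) ∧
      (∀ i k k', k ≤ k' → c i (R i k') ≤ c i (R i k)) ∧
      ((m ⌈/⌉ n : ℕ) + m : ℝ) / ((m ⌈/⌉ n : ℕ) + n * ((m + 1) ⌈/⌉ (n + 1) : ℕ)) ≤
        ∑ x, A R x * ⨆ i, (∑ j with x j = i, c i j) / MMS (n + 1) (m + 1) (c i) := by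
  obtain ⟨hnonneg, hsum⟩ := hdist fun _ => Equiv.refl _
  obtain ⟨c, hc0, hcne, hanti, hle⟩ := exists_antitone_cost_le_expected_ratio hn hm hnonneg hsum
  refine ⟨fun _ => Equiv.refl _, fun _ => c, fun _ => hc0, fun _ => hcne,
    fun _ _ _ hk => hanti hk, ?_⟩
  simpa only [iSup_div_MMS_eq_makespan_div_MMS (MMS_pos hc0 hcne).le] using hle

/-- no randomized ordinal algorithm for 2 agents and 4 chores has
expected approximation ratio smaller than 6/5.  A randomized ordinal algorithm `A`
maps a profile of rankings (each an equiv `Fin 4 ≃ Fin 4`, position `k` holding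
the item `R i k`, earlier positions having weakly larger cost) to a probability
distribution over allocations `Fin 4 → Fin 2`, encoded by nonnegative weights
summing to 1.  For every such `A` there are rankings `R` and consistent,
nonnegative, not-identically-zero cost vectors such that the expected value of
`max_i c_i(x_i)/MMS_i` is at least `6/5`. -/
theorem ordinal_rand_lower_bound
    (A : (Fin 2 → (Fin 4 ≃ Fin 4)) → ((Fin 4 → Fin 2) → ℝ))
    (hdist : ∀ R, (∀ x, 0 ≤ A R x) ∧ ∑ x : Fin 4 → Fin 2, A R x = 1) :
    ∃ (R : Fin 2 → (Fin 4 ≃ Fin 4)) (c : Fin 2 → Fin 4 → ℝ),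
      (∀ i j, 0 ≤ c i j) ∧
      (∀ i : Fin 2, ∃ j, c i j ≠ 0) ∧
      (∀ (i : Fin 2) (k k' : Fin 4), k ≤ k' → c i (R i k') ≤ c i (R i k)) ∧
      (6 / 5 : ℝ) ≤
        ∑ x : Fin 4 → Fin 2, A R x *
          max ((∑ j ∈ Finset.univ.filter (fun j => x j = 0), c 0 j) / MMS 2 4 (c 0))
            ((∑ j ∈ Finset.univ.filter (fun j => x j = 1), c 1 j) / MMS 2 4 (c 1)) := by
  have hbound : (6 / 5 : ℝ) = ((3 ⌈/⌉ 1 : ℕ) + 3) / ((3 ⌈/⌉ 1 : ℕ) + 1 * (4 ⌈/⌉ 2 : ℕ)) := by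
    norm_num [Nat.ceilDiv_eq_add_pred_div]
  simpa [hbound, ciSup_fin_two] using
    ordinal_rand_lower_bound_general one_pos three_pos A hdist
end

section
/- No deterministic strategyproof cardinal allocation algorithm for 2 agents and 4 chores has approximation ratio smaller than 4/3: for every deterministic SP algorithm A mapping cost profiles to allocations and every ε > 0, there exists a profile (c_1, c_2) of nonnegative cost vectors such that, writing x = A(c_1, c_2), some agent i satisfies c_i(x_i) > (4/3 − ε)·MMS_i. -/
/-!
Among four items, let the *unit* vector give each of them cost `1`, and let the vector *spiked* at
an item `p` raise the cost of `p` to `3`; their maxmin shares are `2` and `3`. An algorithm beating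
`4 / 3` splits the items two and two when both agents report the unit vector. Let `p` go to agent
`k`, and not to agent `i`. If first `i` and then `k` change their report to the vector spiked at
`p`, strategyproofness leaves `k` with at least two items, too many to go with `p` at a cost of at
most `3`. So `i` gets `p`, and nothing else. If `i` now reports the vector spiked at another item
`q`, strategyproofness still leaves `i` with at most one item. When `q` went to `i` in the initial
split, the same reasoning with `(i, p)` and `(k, q)` exchanged reaches the same profile and leaves
`k` with at most one item there, so that not all four items are allocated.
-/

open Finset Function

section Allocation

variable {ι M R : Type*} [Fintype M] [DecidableEq ι]

/-- The cost, according to the cost vector `v`, of the bundle that agent `i` receives in the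
allocation `x`, encoded as the map from items to their owners. -/
def bundleCost [AddCommMonoid R] (v : M → R) (x : M → ι) (i : ι) : R :=
  ∑ j with x j = i, v j

lemma bundleCost_natCast [NonAssocSemiring R] (v : M → ℕ) (x : M → ι) (i : ι) :
    bundleCost (fun j => (v j : R)) x i = bundleCost v x i :=
  (Nat.cast_sum ..).symm

/-- Strategyproofness of an allocation algorithm for chores: no agent lowers the cost of their
bundle by misreporting. Costs are restricted to be nonnegative, which is no restriction for
`R = ℕ`. -/
def IsStrategyproof [AddCommMonoid R] [LE R] (A : (ι → M → R) → M → ι) : Prop :=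
  ∀ c : ι → M → R, (∀ i j, 0 ≤ c i j) → ∀ (i : ι) (d : M → R), (∀ j, 0 ≤ d j) →
    bundleCost (c i) (A c) i ≤ bundleCost (c i) (A (update c i d)) i

namespace IsStrategyproof

lemma comp_natCast [Semiring R] [PartialOrder R] [IsStrictOrderedRing R]
    {A : (ι → M → R) → M → ι} (hA : IsStrategyproof A) :
    IsStrategyproof fun c : ι → M → ℕ => A fun i j => (c i j : R) := by
  intro c _ i d _
  have hupdate : update (fun i j => (c i j : R)) i (fun j => (d j : R)) =
      fun l j => (update c i d l j : R) :=
    funext fun l => (apply_update (fun _ v j => ((v j : ℕ) : R)) c i d l).symm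
  have h := hA (fun i j => c i j) (fun _ _ => Nat.cast_nonneg _) i (fun j => d j)
    fun _ => Nat.cast_nonneg _
  rw [hupdate, bundleCost_natCast, bundleCost_natCast] at h
  exact Nat.cast_le.mp h

variable {A : (ι → M → ℕ) → M → ι}

lemma bundleCost_le_bundleCost_update (hA : IsStrategyproof A) (c : ι → M → ℕ) (i : ι)
    (d : M → ℕ) : bundleCost (c i) (A c) i ≤ bundleCost (c i) (A (update c i d)) i :=
  hA c (fun _ _ => Nat.zero_le _) i d fun _ => Nat.zero_le _

lemma bundleCost_update_le_bundleCost (hA : IsStrategyproof A) (c : ι → M → ℕ) (i : ι)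
    (d : M → ℕ) : bundleCost d (A (update c i d)) i ≤ bundleCost d (A c) i := by
  simpa using hA.bundleCost_le_bundleCost_update (update c i d) i (c i)

end IsStrategyproof

end Allocation

section MaxminShare

variable {m : ℕ}

lemma mms_le_of_forall_bundleCost_le {n : ℕ} [NeZero n] {c : Fin m → ℝ} {K : ℝ}
    (P : Fin m → Fin n) (hP : ∀ k, bundleCost c P k ≤ K) : MMS n m c ≤ K :=
  (ciInf_le (Set.finite_range _).bddBelow P).trans (ciSup_le hP)

lemma le_mms {n : ℕ} [NeZero n] {c : Fin m → ℝ} (hc : ∀ j, 0 ≤ c j) (j : Fin m) :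
    c j ≤ MMS n m c :=
  le_ciInf fun P => calc
    c j ≤ ∑ l with P l = P j, c l := single_le_sum (fun l _ => hc l) (by simp)
    _ ≤ ⨆ k, ∑ l with P l = k, c l :=
      le_ciSup (f := fun k => ∑ l with P l = k, c l) (Set.finite_range _).bddAbove (P j)

lemma mms_two_le_of_sum_le {c : Fin m → ℝ} {K : ℝ} (T : Finset (Fin m))
    (hT : ∑ j ∈ T, c j ≤ K) (hTc : ∑ j ∈ Tᶜ, c j ≤ K) : MMS 2 m c ≤ K := by
  have h0 : ({j | (if j ∈ T then 0 else 1 : Fin 2) = 0} : Finset (Fin m)) = T := by ext; simp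
  have h1 : ({j | (if j ∈ T then 0 else 1 : Fin 2) = 1} : Finset (Fin m)) = Tᶜ := by ext; simp
  exact mms_le_of_forall_bundleCost_le (fun j => if j ∈ T then 0 else 1) <| Fin.forall_fin_two.mpr
    ⟨by rwa [bundleCost, h0], by rwa [bundleCost, h1]⟩

end MaxminShare

section SpikedCost

variable {M : Type*} [DecidableEq M]

/-- The cost vector in which the items of `S` cost `1` and all others are free. -/
def unitCost (S : Finset M) (j : M) : ℕ := if j ∈ S then 1 else 0

/-- The unit cost vector of `S`, raised by `2` at the item `p`. -/
def spikedCost (S : Finset M) (p : M) (j : M) : ℕ := unitCost S j + if j = p then 2 else 0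

lemma sum_unitCost (S T : Finset M) : ∑ j ∈ T, unitCost S j = #(T ∩ S) := by
  simp [unitCost]

lemma sum_spikedCost (S T : Finset M) (p : M) :
    ∑ j ∈ T, spikedCost S p j = #(T ∩ S) + if p ∈ T then 2 else 0 := by
  simp [spikedCost, sum_add_distrib, sum_unitCost]

lemma bundleCost_unitCost {ι : Type*} [DecidableEq ι] [Fintype M] (S : Finset M) (x : M → ι)
    (i : ι) : bundleCost (unitCost S) x i = #{j ∈ S | x j = i} := by
  rw [bundleCost, sum_unitCost, filter_inter, univ_inter]

lemma bundleCost_spikedCost {ι : Type*} [DecidableEq ι] [Fintype M] (S : Finset M) (p : M)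
    (x : M → ι) (i : ι) :
    bundleCost (spikedCost S p) x i = #{j ∈ S | x j = i} + if x p = i then 2 else 0 := by
  simp [bundleCost, sum_spikedCost, filter_inter]

variable {m : ℕ} {S : Finset (Fin m)}

lemma mms_unitCost_le_two (hS : #S = 4) : MMS 2 m (fun j => unitCost S j) ≤ 2 := by
  obtain ⟨T, hTS, hT⟩ := exists_subset_card_eq (show 2 ≤ #S by omega)
  apply mms_two_le_of_sum_le T <;> norm_cast <;> rw [sum_unitCost]
  · rw [inter_eq_left.mpr hTS, hT]
  · rw [inter_comm, ← sdiff_eq_inter_compl, card_sdiff_of_subset hTS, hS, hT]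

lemma mms_spikedCost_le_three (hS : #S = 4) {p : Fin m} (hp : p ∈ S) :
    MMS 2 m (fun j => spikedCost S p j) ≤ 3 := by
  apply mms_two_le_of_sum_le {p} <;> norm_cast <;> rw [sum_spikedCost]
  · simp [hp]
  · simp [inter_comm, ← sdiff_eq_inter_compl, sdiff_singleton_eq_erase, card_erase_of_mem hp, hS]

end SpikedCost

section TwoAgents

lemma card_filter_add_card_filter_of_ne {M : Type*} (S : Finset M) (x : M → Fin 2) {i k : Fin 2}
    (hik : i ≠ k) : #{j ∈ S | x j = i} + #{j ∈ S | x j = k} = #S := by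
  have h (j : M) : x j = k ↔ ¬ x j = i := by omega
  simp only [h, card_filter_add_card_filter_not]

lemma update_update_const_of_ne {α : Type*} {i k : Fin 2} (hik : i ≠ k) (a b d : α) :
    update (update (fun _ => a) i b) k d = update (fun _ => d) i b := by
  funext l
  obtain rfl | rfl : l = i ∨ l = k := by omega
  · simp [hik]
  · simp [hik.symm]

namespace IsStrategyproof

variable {M : Type*} [Fintype M] [DecidableEq M] {A : (Fin 2 → M → ℕ) → M → Fin 2}
  {S : Finset M} {i k : Fin 2} {p q : M}

lemma two_le_card_bundle_spikedCost (hA : IsStrategyproof A) (hS : #S = 4) (hik : i ≠ k)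
    (hunit : bundleCost (unitCost S) (A fun _ => unitCost S) i ≤ 2)
    (hp : A (fun _ => unitCost S) p ≠ i) :
    2 ≤ #{j ∈ S | A (fun _ => spikedCost S p) j = k} := by
  set v : Fin 2 → M → ℕ := update (fun _ => unitCost S) i (spikedCost S p) with hv
  have hv_i : #{j ∈ S | A v j = i} ≤ 2 := by
    have h := hA.bundleCost_update_le_bundleCost (fun _ => unitCost S) i (spikedCost S p)
    rw [bundleCost_spikedCost, bundleCost_spikedCost, if_neg hp, ← hv] at h
    rw [bundleCost_unitCost] at hunit
    omega
  have hv_k : #{j ∈ S | A v j = k} ≤ #{j ∈ S | A (fun _ => spikedCost S p) j = k} := by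
    have h := hA.bundleCost_le_bundleCost_update v k (spikedCost S p)
    have hvk : v k = unitCost S := update_of_ne hik.symm ..
    rwa [hvk, hv, update_update_const_of_ne hik, update_eq_self_iff.mpr rfl,
      bundleCost_unitCost, bundleCost_unitCost] at h
  have := card_filter_add_card_filter_of_ne S (A v) hik
  omega

lemma bundle_spikedCost_eq_singleton (hA : IsStrategyproof A) (hS : #S = 4) (hik : i ≠ k)
    (hunit : bundleCost (unitCost S) (A fun _ => unitCost S) i ≤ 2)
    (hspiked : ∀ l, bundleCost (spikedCost S p) (A fun _ => spikedCost S p) l ≤ 3)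
    (hpS : p ∈ S) (hp : A (fun _ => unitCost S) p ≠ i) :
    ({j ∈ S | A (fun _ => spikedCost S p) j = i} : Finset M) = {p} := by
  have hk_two := hA.two_le_card_bundle_spikedCost hS hik hunit hp
  have hk := hspiked k
  have hi := hspiked i
  rw [bundleCost_spikedCost] at hi hk
  have hpi : A (fun _ => spikedCost S p) p = i := by
    by_contra hne
    rw [if_pos (by omega)] at hk
    omega
  rw [if_pos hpi] at hi
  exact (eq_of_subset_of_card_le (by simp [hpS, hpi]) (by rw [card_singleton]; omega)).symm

lemma card_bundle_update_spikedCost_le_one (hA : IsStrategyproof A) (hpq : p ≠ q) (hqS : q ∈ S)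
    (hp : ({j ∈ S | A (fun _ => spikedCost S p) j = i} : Finset M) = {p}) :
    #{j ∈ S | A (update (fun _ => spikedCost S p) i (spikedCost S q)) j = i} ≤ 1 := by
  have hq : A (fun _ => spikedCost S p) q ≠ i := fun hqi =>
    hpq.symm (mem_singleton.mp (hp ▸ mem_filter.mpr ⟨hqS, hqi⟩))
  have h := hA.bundleCost_update_le_bundleCost (fun _ => spikedCost S p) i (spikedCost S q)
  rw [bundleCost_spikedCost, bundleCost_spikedCost, if_neg hq, hp, card_singleton] at h
  omega

theorem exists_bundleCost_ge (hA : IsStrategyproof A) (hS : #S = 4) :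
    (∃ i, 3 ≤ bundleCost (unitCost S) (A fun _ => unitCost S) i) ∨
      ∃ p ∈ S, ∃ i, 4 ≤ bundleCost (spikedCost S p) (A fun _ => spikedCost S p) i := by
  by_contra! ⟨hunit, hspiked⟩
  replace hunit i := Nat.le_of_lt_succ (hunit i)
  replace hspiked p hp i := Nat.le_of_lt_succ (hspiked p hp i)
  have exists_item {i k : Fin 2} (hik : i ≠ k) : ∃ p ∈ S, A (fun _ => unitCost S) p = k := by
    have hi := hunit i
    rw [bundleCost_unitCost] at hi
    have := card_filter_add_card_filter_of_ne S (A fun _ => unitCost S) hik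
    exact filter_nonempty_iff.mp (card_pos.mp (by omega))
  obtain ⟨p, hpS, hp⟩ := exists_item (zero_ne_one (α := Fin 2))
  obtain ⟨q, hqS, hq⟩ := exists_item (one_ne_zero (α := Fin 2))
  have hpq : p ≠ q := by rintro rfl; exact one_ne_zero (hp.symm.trans hq)
  have h0 := hA.card_bundle_update_spikedCost_le_one hpq hqS <|
    hA.bundle_spikedCost_eq_singleton hS zero_ne_one (hunit 0) (hspiked p hpS) hpS (by simp [hp])
  have h1 := hA.card_bundle_update_spikedCost_le_one hpq.symm hpS <|
    hA.bundle_spikedCost_eq_singleton hS one_ne_zero (hunit 1) (hspiked q hqS) hqS (by simp [hq])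
  have hprofile : update (fun _ => spikedCost S p) 0 (spikedCost S q) =
      update (fun _ : Fin 2 => spikedCost S q) 1 (spikedCost S p) := by
    funext l
    fin_cases l <;> rfl
  rw [hprofile] at h0
  have := card_filter_add_card_filter_of_ne S
    (A (update (fun _ => spikedCost S q) 1 (spikedCost S p))) zero_ne_one
  omega

end IsStrategyproof

end TwoAgents

theorem cardinal_sp_lower_bound_general {m : ℕ} (hm : 4 ≤ m)
    {A : (Fin 2 → Fin m → ℝ) → Fin m → Fin 2} (hA : IsStrategyproof A) :
    ∃ v : Fin m → ℝ, (∀ j, 0 ≤ v j) ∧ 0 < MMS 2 m v ∧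
      ∃ i, 4 / 3 * MMS 2 m v ≤ bundleCost v (A fun _ => v) i := by
  obtain ⟨S, -, hS⟩ := exists_subset_card_eq (s := (univ : Finset (Fin m))) (by simpa using hm)
  obtain ⟨s, hs⟩ : S.Nonempty := card_pos.mp (by omega)
  have mms_pos {v : Fin m → ℕ} (hv : 0 < v s) : 0 < MMS 2 m (fun j => v j) :=
    (Nat.cast_pos.mpr hv).trans_le (le_mms (fun _ => Nat.cast_nonneg _) s)
  obtain ⟨i, hi⟩ | ⟨p, hp, i, hi⟩ := hA.comp_natCast.exists_bundleCost_ge hS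
  · refine ⟨fun j => unitCost S j, fun _ => Nat.cast_nonneg _, mms_pos (by simp [unitCost, hs]),
      i, ?_⟩
    rw [bundleCost_natCast]
    linarith [mms_unitCost_le_two hS, (Nat.ofNat_le_cast (α := ℝ)).mpr hi]
  · refine ⟨fun j => spikedCost S p j, fun _ => Nat.cast_nonneg _,
      mms_pos (by simp [spikedCost, unitCost, hs]), i, ?_⟩
    rw [bundleCost_natCast]
    linarith [mms_spikedCost_le_three hS hp, (Nat.ofNat_le_cast (α := ℝ)).mpr hi]

/-- no deterministic strategyproof cardinal algorithm for 2 agents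
and 4 chores has approximation ratio smaller than 4/3: for every deterministic SP
algorithm `A` (mapping nonnegative cost profiles to allocations `Fin 4 → Fin 2`)
and every `ε > 0`, there is a profile on which some agent's bundle costs more
than `(4/3 − ε)·MMS_i`. -/
theorem cardinal_sp_lower_bound
    (A : (Fin 2 → Fin 4 → ℝ) → (Fin 4 → Fin 2))
    (hSP : ∀ c : Fin 2 → Fin 4 → ℝ, (∀ i j, 0 ≤ c i j) →
      ∀ (i : Fin 2) (c'i : Fin 4 → ℝ), (∀ j, 0 ≤ c'i j) →
      ∑ j ∈ Finset.univ.filter (fun j => A c j = i), c i j ≤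
        ∑ j ∈ Finset.univ.filter (fun j => A (Function.update c i c'i) j = i), c i j)
    (ε : ℝ) (hε : 0 < ε) :
    ∃ c : Fin 2 → Fin 4 → ℝ,
      (∀ i j, 0 ≤ c i j) ∧
      ∃ i : Fin 2,
        (4 / 3 - ε) * MMS 2 4 (c i) <
          ∑ j ∈ Finset.univ.filter (fun j => A c j = i), c i j := by
  obtain ⟨v, hv, hpos, i, hi⟩ := cardinal_sp_lower_bound_general le_rfl hSP
  exact ⟨fun _ => v, fun _ => hv, i, (mul_lt_mul_of_pos_right (sub_lt_self _ hε) hpos).trans_le hi⟩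
end

section
/- The round-robin algorithm is a (2 − 1/n)-approximation of maxmin share fairness for chores: fix the agent order 1,…,n and let the agents repeatedly take turns in cyclic order, each agent at her turn removing and keeping an unallocated item of minimum cost to her (arbitrary tie-breaking). Then the resulting allocation X_1,…,X_n satisfies c_i(X_i) ≤ (2 − 1/n)·MMS_i for every agent i. -/
/-!
The turns of one agent are at least `n` apart. Append `n - 1` dummy turns of cost `MMS` to the
sequence of picks. Each of her turns then opens a window of `n` consecutive turns, none of them
cheaper to her than her own pick: the real ones because she is greedy, the dummy ones because no
single item costs more than `MMS`. The windows are disjoint, so `n` times the cost of her bundle is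
at most the total cost, itself at most `n * MMS`, plus the `(n - 1) * MMS` of the dummy turns.
-/

section MMS

variable {n m : ℕ}

theorem MMS_nonneg {c : Fin m → ℝ} (hc : ∀ j, 0 ≤ c j) : 0 ≤ MMS n m c :=
  Real.iInf_nonneg fun _ => Real.iSup_nonneg fun _ => Finset.sum_nonneg fun j _ => hc j

theorem exists_partition_forall_sum_le_MMS (hn : 0 < n) (c : Fin m → ℝ) :
    ∃ P : Fin m → Fin n, ∀ k, ∑ j with P j = k, c j ≤ MMS n m c := by
  have : Nonempty (Fin n) := ⟨⟨0, hn⟩⟩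
  obtain ⟨P, hP⟩ := exists_eq_ciInf_of_finite (f := fun P : Fin m → Fin n =>
    ⨆ k, ∑ j with P j = k, c j)
  exact ⟨P, fun k => (le_ciSup (Set.finite_range _).bddAbove k).trans_eq hP⟩

theorem sum_le_mul_MMS (hn : 0 < n) (c : Fin m → ℝ) : ∑ j, c j ≤ n * MMS n m c := by
  obtain ⟨P, hP⟩ := exists_partition_forall_sum_le_MMS hn c
  calc ∑ j, c j = ∑ k, ∑ j with P j = k, c j := (Finset.sum_fiberwise _ P c).symm
    _ ≤ ∑ _k : Fin n, MMS n m c := Finset.sum_le_sum fun k _ => hP k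
    _ = n * MMS n m c := by simp

theorem le_MMS (hn : 0 < n) {c : Fin m → ℝ} (hc : ∀ j, 0 ≤ c j) (j : Fin m) :
    c j ≤ MMS n m c := by
  obtain ⟨P, hP⟩ := exists_partition_forall_sum_le_MMS hn c
  exact (Finset.single_le_sum (fun x _ => hc x) (by simp)).trans (hP (P j))

end MMS

section Greedy

variable {τ α R : Type*}

/-- An agent with costs `c` is greedy at turn `t` of the picking sequence `pick`: the item taken at
`t` is cheapest for her among all the items not taken before `t`. -/
def IsGreedyAt [LT τ] [LE R] (c : α → R) (pick : τ → α) (t : τ) : Prop :=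
  ∀ j, (∀ t' < t, pick t' ≠ j) → c (pick t) ≤ c j

theorem IsGreedyAt.le_of_le [Preorder τ] [LE R] {c : α → R} {pick : τ → α} {t u : τ}
    (ht : IsGreedyAt c pick t) (hpick : Function.Injective pick) (htu : t ≤ u) :
    c (pick t) ≤ c (pick u) :=
  ht (pick u) fun _ ht' => hpick.ne (ht'.trans_le htu).ne

end Greedy

section Windows

variable {M : Type*} [AddCommMonoid M] [PartialOrder M] [IsOrderedAddMonoid M]

theorem nsmul_sum_le_sum_of_pairwiseDisjoint {ι α : Type*} {s : Finset ι} {u : Finset α}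
    {W : ι → Finset α} {n : ℕ} {f : ι → M} {g : α → M}
    (hdisj : (s : Set ι).PairwiseDisjoint W) (hcard : ∀ i ∈ s, (W i).card = n)
    (hsub : ∀ i ∈ s, W i ⊆ u) (hg : ∀ a ∈ u, 0 ≤ g a) (hfg : ∀ i ∈ s, ∀ a ∈ W i, f i ≤ g a) :
    n • ∑ i ∈ s, f i ≤ ∑ a ∈ u, g a := by
  classical
  calc n • ∑ i ∈ s, f i = ∑ i ∈ s, n • f i := (Finset.sum_nsmul _ _ _).symm
    _ ≤ ∑ i ∈ s, ∑ a ∈ W i, g a := Finset.sum_le_sum fun i hi =>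
      hcard i hi ▸ Finset.card_nsmul_le_sum _ _ _ (hfg i hi)
    _ = ∑ a ∈ s.biUnion W, g a := (Finset.sum_biUnion hdisj).symm
    _ ≤ ∑ a ∈ u, g a := Finset.sum_le_sum_of_subset_of_nonneg (Finset.biUnion_subset.mpr hsub)
      fun a ha _ => hg a ha

theorem pairwiseDisjoint_Ico_add_of_forall_add_le {n : ℕ} {ι : Type*} [LinearOrder ι] {e : ι → ℕ}
    {T : Set ι} (hgap : ∀ s ∈ T, ∀ t ∈ T, s < t → e s + n ≤ e t) :
    T.PairwiseDisjoint fun t => Finset.Ico (e t) (e t + n) := by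
  intro s hs t ht hst
  have hsep : e s + n ≤ e t ∨ e t + n ≤ e s := hst.lt_or_gt.imp (hgap s hs t ht) (hgap t ht s hs)
  simp only [Function.onFun, Finset.disjoint_left, Finset.mem_Ico]
  omega

theorem nsmul_sum_le_sum_add_of_forall_add_le {m n : ℕ} {f : Fin m → M} {b : M}
    {T : Finset (Fin m)} (hf : ∀ t, 0 ≤ f t) (hb : 0 ≤ b) (hfb : ∀ t ∈ T, f t ≤ b)
    (hgap : ∀ s ∈ T, ∀ t ∈ T, s < t → (s : ℕ) + n ≤ t) (hmin : ∀ t ∈ T, ∀ u, t ≤ u → f t ≤ f u) :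
    n • ∑ t ∈ T, f t ≤ ∑ t, f t + (n - 1) • b := by
  let padded : ℕ → M := fun t => if h : t < m then f ⟨t, h⟩ else b
  have hsum : ∑ t ∈ Finset.range (m + (n - 1)), padded t = ∑ t, f t + (n - 1) • b := by
    rw [Finset.sum_range_add, Finset.sum_range]
    simp [padded]
  rw [← hsum]
  refine nsmul_sum_le_sum_of_pairwiseDisjoint (W := fun t : Fin m => Finset.Ico (t : ℕ) (t + n))
    (pairwiseDisjoint_Ico_add_of_forall_add_le hgap) (by simp) ?windows ?nonneg ?minimal
  case windows =>
    intro t _ u hu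
    simp only [Finset.mem_Ico, Finset.mem_range] at hu ⊢
    omega
  case nonneg =>
    intro t _
    by_cases h : t < m <;> simp [padded, h, hf, hb]
  case minimal =>
    intro t ht u hu
    by_cases h : u < m
    · simpa [padded, h] using hmin t ht ⟨u, h⟩ (Finset.mem_Ico.mp hu).1
    · simpa [padded, h] using hfb t ht

end Windows

theorem roundRobin_approx_general {n m : ℕ} (hn : 0 < n) {c : Fin m → ℝ} (hc : ∀ j, 0 ≤ c j)
    {pick : Fin m → Fin m} (hpick : Function.Bijective pick) {turns : Finset (Fin m)}
    (hgap : ∀ s ∈ turns, ∀ t ∈ turns, s < t → (s : ℕ) + n ≤ t)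
    (hgreedy : ∀ t ∈ turns, IsGreedyAt c pick t) :
    ∑ t ∈ turns, c (pick t) ≤ (2 - 1 / (n : ℝ)) * MMS n m c := by
  have hn_pos : (0 : ℝ) < n := Nat.cast_pos.mpr hn
  have hwindows : n • ∑ t ∈ turns, c (pick t) ≤ ∑ t, c (pick t) + (n - 1) • MMS n m c :=
    nsmul_sum_le_sum_add_of_forall_add_le (fun t => hc (pick t)) (MMS_nonneg hc)
      (fun t _ => le_MMS hn hc (pick t)) hgap
      fun t ht _ htu => (hgreedy t ht).le_of_le hpick.injective htu
  refine le_of_mul_le_mul_left ?_ hn_pos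
  calc n * ∑ t ∈ turns, c (pick t) ≤ ∑ t, c (pick t) + (n - 1) * MMS n m c := by
        simpa [Nat.cast_pred hn] using hwindows
    _ = ∑ j, c j + (n - 1) * MMS n m c := by rw [hpick.sum_comp c]
    _ ≤ n * MMS n m c + (n - 1) * MMS n m c := by gcongr; exact sum_le_mul_MMS hn c
    _ = n * ((2 - 1 / n) * MMS n m c) := by field_simp; ring

/-- the round-robin algorithm is a `(2 − 1/n)`-approximation of MMS
fairness for chores.  `pick t` is the item taken at turn `t`; turns proceed in the
cyclic agent order `0,1,…,n-1,0,1,…`, so turn `t` belongs to agent `t % n`, who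
takes an unallocated item of minimum cost to her (arbitrary tie-breaking).  Agent
`i`'s bundle consists of the items picked at her turns. -/
theorem roundRobin_approx (n m : ℕ) (hn : 0 < n)
    (c : Fin n → Fin m → ℝ) (hc : ∀ i j, 0 ≤ c i j)
    (pick : Fin m → Fin m) (hbij : Function.Bijective pick)
    (hgreedy : ∀ t j : Fin m, (∀ t' : Fin m, t' < t → pick t' ≠ j) →
      c ⟨(t : ℕ) % n, Nat.mod_lt _ hn⟩ (pick t) ≤ c ⟨(t : ℕ) % n, Nat.mod_lt _ hn⟩ j) :
    ∀ i : Fin n,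
      ∑ t ∈ Finset.univ.filter (fun t : Fin m => (t : ℕ) % n = (i : ℕ)), c i (pick t) ≤
        (2 - 1 / (n : ℝ)) * MMS n m (c i) := by
  refine fun i => roundRobin_approx_general hn (hc i) hbij (fun s hs t ht hst => ?_) fun t ht => ?_
  · exact Nat.ModEq.add_le_of_lt (by simp_all [Nat.ModEq]) hst
  · obtain rfl : ⟨t % n, Nat.mod_lt _ hn⟩ = i := Fin.ext (Finset.mem_filter.mp ht).2
    exact hgreedy t
end

section
/- In the 3-agent divide-and-choose partition, each bundle is acceptable to agent 1: suppose the items 1,…,m satisfy c_{1,1} ≥ c_{1,2} ≥ … ≥ c_{1,m} ≥ 0 and define S_1 = {1}, S_2 = {j : j even}, S_3 = {j : j odd, j ≥ 3}. Then c_1(S_1) ≤ MMS_1 and c_1(S_3) ≤ c_1(S_2) ≤ (1/2)·c_1(M) ≤ (3/2)·MMS_1; in particular each of the three bundles has c_1-cost at most (3/2)·MMS_1, where MMS_1 is defined with respect to partitions into 3 bundles. -/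
section Matching

variable {ι κ R : Type*} [AddCommMonoid R] [PartialOrder R] [IsOrderedAddMonoid R]

theorem sum_le_sum_of_injOn {s : Finset ι} {t : Finset κ} {f : ι → R} {g : κ → R} (e : ι → κ)
    (he : Set.InjOn e s) (hst : Set.MapsTo e s t) (hg : ∀ k ∈ t, 0 ≤ g k)
    (hle : ∀ i ∈ s, f i ≤ g (e i)) : ∑ i ∈ s, f i ≤ ∑ k ∈ t, g k := by
  classical
  calc
    ∑ i ∈ s, f i ≤ ∑ i ∈ s, g (e i) := Finset.sum_le_sum hle
    _ = ∑ k ∈ s.image e, g k := (Finset.sum_image he).symm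
    _ ≤ ∑ k ∈ t, g k :=
      Finset.sum_le_sum_of_subset_of_nonneg (Finset.image_subset_iff.2 hst) fun k hk _ => hg k hk

theorem sum_le_sum_of_forall_exists_covBy [LinearOrder ι] {s t : Finset ι} {f : ι → R}
    (hf : Antitone f) (hnonneg : ∀ i ∈ t, 0 ≤ f i) (hst : ∀ j ∈ s, ∃ i ∈ t, i ⋖ j) :
    ∑ j ∈ s, f j ≤ ∑ i ∈ t, f i := by
  choose! pred hmem hcov using hst
  have hinj : Set.InjOn pred s := fun i hi j hj hij =>
    (hcov i hi).unique_right (hij ▸ hcov j hj)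
  exact sum_le_sum_of_injOn pred hinj hmem hnonneg fun j hj => hf (hcov j hj).le

end Matching

section Parity

variable {m : ℕ} {R : Type*} [AddCommMonoid R] [PartialOrder R] [IsOrderedAddMonoid R]
  {c : Fin m → R}

theorem sum_filter_val_le_sum_filter_val_of_succ_imp {p q : ℕ → Prop} [DecidablePred p]
    [DecidablePred q] (hc : ∀ j, 0 ≤ c j) (hanti : Antitone c) (hp : ¬p 0)
    (hpq : ∀ k, p (k + 1) → q k) :
    ∑ j with p j.val, c j ≤ ∑ j with q j.val, c j := by
  refine sum_le_sum_of_forall_exists_covBy hanti (fun j _ => hc j) fun j hj => ?_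
  have hpj : p j.val := (Finset.mem_filter_univ j).1 hj
  obtain ⟨k, hk⟩ := Nat.exists_eq_add_one_of_ne_zero fun h0 => hp (h0 ▸ hpj)
  have hcov : (⟨k, by omega⟩ : Fin m) ⋖ j := Fin.covBy_iff.2 (Nat.covBy_iff_add_one_eq.2 hk.symm)
  exact ⟨_, (Finset.mem_filter_univ _).2 (hpq k (hk ▸ hpj)), hcov⟩

theorem sum_pos_even_le_sum_odd (hc : ∀ j, 0 ≤ c j) (hanti : Antitone c) :
    ∑ j with j.val % 2 = 0 ∧ 2 ≤ j.val, c j ≤ ∑ j with j.val % 2 = 1, c j :=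
  sum_filter_val_le_sum_filter_val_of_succ_imp (p := fun k => k % 2 = 0 ∧ 2 ≤ k)
    (q := fun k => k % 2 = 1) hc hanti (by omega) (by omega)

theorem sum_odd_le_sum_not_odd (hc : ∀ j, 0 ≤ c j) (hanti : Antitone c) :
    ∑ j with j.val % 2 = 1, c j ≤ ∑ j with ¬j.val % 2 = 1, c j :=
  sum_filter_val_le_sum_filter_val_of_succ_imp (p := fun k => k % 2 = 1)
    (q := fun k => ¬k % 2 = 1) hc hanti (by omega) (by omega)

theorem two_nsmul_sum_odd_le_sum (hc : ∀ j, 0 ≤ c j) (hanti : Antitone c) :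
    2 • ∑ j with j.val % 2 = 1, c j ≤ ∑ j, c j := by
  calc
    2 • ∑ j with j.val % 2 = 1, c j
        = ∑ j with j.val % 2 = 1, c j + ∑ j with j.val % 2 = 1, c j := two_nsmul _
    _ ≤ ∑ j with j.val % 2 = 1, c j + ∑ j with ¬j.val % 2 = 1, c j := by
      gcongr 1
      exact sum_odd_le_sum_not_odd hc hanti
    _ = ∑ j, c j := Finset.sum_filter_add_sum_filter_not _ _ _

end Parity

section MaxminShare

variable {n m : ℕ} [NeZero n] {c : Fin m → ℝ}

theorem le_MMS_of_forall_exists_bundle {x : ℝ}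
    (h : ∀ P : Fin m → Fin n, ∃ k, x ≤ ∑ j with P j = k, c j) : x ≤ MMS n m c :=
  le_ciInf fun P =>
    let ⟨k, hk⟩ := h P
    le_ciSup_of_le (Set.finite_range _).bddAbove k hk

theorem item_le_MMS (hc : ∀ j, 0 ≤ c j) (i : Fin m) : c i ≤ MMS n m c :=
  le_MMS_of_forall_exists_bundle fun P =>
    ⟨P i, Finset.single_le_sum (fun j _ => hc j) ((Finset.mem_filter_univ i).2 rfl)⟩

theorem sum_div_le_MMS (c : Fin m → ℝ) : (∑ j, c j) / n ≤ MMS n m c := by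
  refine le_MMS_of_forall_exists_bundle fun P => ?_
  refine Fintype.exists_le_sum_fiber_of_nsmul_le_sum P (le_of_eq ?_)
  rw [Fintype.card_fin, nsmul_eq_mul, mul_div_cancel₀ _ (NeZero.ne (n : ℝ))]

end MaxminShare

/-- in the 3-agent divide-and-choose partition, each bundle is
acceptable to agent 1.  Items `0,…,m-1` satisfy `c 0 ≥ c 1 ≥ … ≥ 0`;
`S₁ = {0}`, `S₂` = items in odd positions, `S₃` = items in even positions `≥ 2`.
Then `c(S₁) ≤ MMS₁` and `c(S₃) ≤ c(S₂) ≤ (1/2)·c(M) ≤ (3/2)·MMS₁` (maxmin share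
with respect to 3 bundles). -/
theorem divideAndChoose_bundles_ok (m : ℕ) (hm : 0 < m)
    (c : Fin m → ℝ) (hc : ∀ j, 0 ≤ c j)
    (hsorted : ∀ j j' : Fin m, j ≤ j' → c j' ≤ c j) :
    c ⟨0, hm⟩ ≤ MMS 3 m c ∧
    ∑ j ∈ Finset.univ.filter (fun j : Fin m => (j : ℕ) % 2 = 0 ∧ 2 ≤ (j : ℕ)), c j ≤
      ∑ j ∈ Finset.univ.filter (fun j : Fin m => (j : ℕ) % 2 = 1), c j ∧
    ∑ j ∈ Finset.univ.filter (fun j : Fin m => (j : ℕ) % 2 = 1), c j ≤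
      (1 / 2 : ℝ) * ∑ j, c j ∧
    (1 / 2 : ℝ) * ∑ j, c j ≤ (3 / 2 : ℝ) * MMS 3 m c := by
  have hanti : Antitone c := fun j j' => hsorted j j'
  refine ⟨item_le_MMS hc _, sum_pos_even_le_sum_odd hc hanti, ?_, ?_⟩
  · have hodd := two_nsmul_sum_odd_le_sum hc hanti
    rw [nsmul_eq_mul, Nat.cast_ofNat] at hodd
    linarith
  · have haverage := sum_div_le_MMS (n := 3) c
    rw [Nat.cast_ofNat] at haverage
    linarith
end
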